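/- Let Ω = {ω₁,ω₂,ω₃} with Σ₀ = Σ₁ = Σ₂ the powerset of Ω. Let π₀ assign probabilities (0, 1/3, 2/3), π₁ assign (1, 0, 0), and π₂ assign (0, 2/3, 1/3) to (ω₁,ω₂,ω₃). Then (π₀,π₁) satisfies extended Bayesianism and (π₁,π₂) satisfies extended Bayesianism, but (π₀,π₂) does not satisfy extended Bayesianism. -/

import Mathlib

open MeasureTheory Set ENNReal

/-- The support of a measure `π` on `(Ω, m)`: the intersection of all `m`-measurable
sets of `π`-measure one. -/
def spt {Ω : Type*} (m : MeasurableSpace Ω) (π : @Measure Ω m) : Set Ω :=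
  ⋂₀ {E : Set Ω | @MeasurableSet Ω m E ∧ π E = 1}

/-- The outer measure on richer events induced by a measure `π` on `(Ω, m)`:
`π*(E) = inf {π F : F m-measurable, E ⊆ F}`. -/
noncomputable def outerM {Ω : Type*} (m : MeasurableSpace Ω) (π : @Measure Ω m)
    (E : Set Ω) : ℝ≥0∞ :=
  ⨅ (F : Set Ω) (_ : @MeasurableSet Ω m F ∧ E ⊆ F), π F

/-- Extended Bayesianism: there is a probability measure `π̄` on the finer σ-algebra `m1`
extending `π₀` (EB1) such that, whenever `π₀*(S₁) > 0`, `π̄(S₁) > 0` and `π₁` is the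
conditional of `π̄` on `S₁` (EB2). -/
def ExtendedBayesianism {Ω : Type*} (m0 m1 : MeasurableSpace Ω)
    (π₀ : @Measure Ω m0) (π₁ : @Measure Ω m1) : Prop :=
  ∃ πb : @Measure Ω m1, @IsProbabilityMeasure Ω m1 πb ∧
    (∀ E : Set Ω, @MeasurableSet Ω m0 E → πb E = π₀ E) ∧
    (0 < outerM m0 π₀ (spt m1 π₁) →
      0 < πb (spt m1 π₁) ∧
      ∀ E : Set Ω, @MeasurableSet Ω m1 E →
        π₁ E = πb (E ∩ spt m1 π₁) / πb (spt m1 π₁))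

/-- `π₁` is commensurate to `π₀`: for all `E, F ∈ Σ₀` with `E ⊆ S₁`,
(C1) `π₀ F = 0 → π₁ F = 0` and (C2) `π₀ E * π₁ F ≤ π₁ E * π₀ F`. -/
def Commensurate {Ω : Type*} (m0 m1 : MeasurableSpace Ω)
    (π₀ : @Measure Ω m0) (π₁ : @Measure Ω m1) : Prop :=
  ∀ E F : Set Ω, @MeasurableSet Ω m0 E → @MeasurableSet Ω m0 F → E ⊆ spt m1 π₁ →
    (π₀ F = 0 → π₁ F = 0) ∧ π₀ E * π₁ F ≤ π₁ E * π₀ F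

/-- `π₁` is boundedly commensurate to `π₀`: commensurate, and in addition (C3)
`inf {π₀ F / π₁ F : F ∈ Σ₀, π₁ F > 0} > 0`. -/
def BoundedlyCommensurate {Ω : Type*} (m0 m1 : MeasurableSpace Ω)
    (π₀ : @Measure Ω m0) (π₁ : @Measure Ω m1) : Prop :=
  Commensurate m0 m1 π₀ π₁ ∧
    0 < ⨅ (F : Set Ω) (_ : @MeasurableSet Ω m0 F ∧ 0 < π₁ F), π₀ F / π₁ F

theorem aux_mem (π : @Measure (Fin 3) ⊤) (h : @IsProbabilityMeasure (Fin 3) ⊤ π)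
    (i : Fin 3) (hi : π {i} ≠ 0) : i ∈ spt ⊤ π := by
  letI : MeasurableSpace (Fin 3) := ⊤
  rintro E ⟨hE, h1⟩
  by_contra hn
  apply hi
  have hc : π Eᶜ = 0 := (prob_compl_eq_zero_iff hE).2 h1
  exact measure_mono_null (by simpa using hn) hc

theorem aux_sub (π : @Measure (Fin 3) ⊤) (E : Set (Fin 3)) (h : π E = 1) :
    spt ⊤ π ⊆ E :=
  Set.sInter_subset_of_mem ⟨trivial, h⟩

theorem aux_eb (π π' : @Measure (Fin 3) ⊤) (h : @IsProbabilityMeasure (Fin 3) ⊤ π)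
    (E : Set (Fin 3)) (h0 : π E = 0) (h1 : π' E = 1) :
    ExtendedBayesianism ⊤ ⊤ π π' := by
  refine ⟨π, h, fun _ _ => rfl, fun hp => ?_⟩
  have : outerM ⊤ π (spt ⊤ π') ≤ π E :=
    iInf₂_le E ⟨trivial, aux_sub π' E h1⟩
  rw [h0] at this
  exact absurd hp (not_lt.2 this)

theorem aux_pair (π : @Measure (Fin 3) ⊤) (h : @IsProbabilityMeasure (Fin 3) ⊤ π)
    (h0 : π {0} = 0) : π {1, 2} = 1 := by
  letI : MeasurableSpace (Fin 3) := ⊤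
  have hs : ({1, 2} : Set (Fin 3)) = {0}ᶜ := by
    ext i; fin_cases i <;> simp
  rw [hs]
  exact (prob_compl_eq_one_iff (MeasurableSpace.measurableSet_top)).2 h0

/-- with `Ω = {ω₁, ω₂, ω₃}` (here `Fin 3`) and `Σ₀ = Σ₁ = Σ₂` the powerset,
`π₀ = (0, 1/3, 2/3)`, `π₁ = (1, 0, 0)`, `π₂ = (0, 2/3, 1/3)`, both `(π₀, π₁)` and
`(π₁, π₂)` satisfy extended Bayesianism, but `(π₀, π₂)` does not. -/
theorem no_composition_example
    (π₀ π₁ π₂ : @Measure (Fin 3) ⊤)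
    (h₀ : @IsProbabilityMeasure (Fin 3) ⊤ π₀)
    (h₁ : @IsProbabilityMeasure (Fin 3) ⊤ π₁)
    (h₂ : @IsProbabilityMeasure (Fin 3) ⊤ π₂)
    (h₀v : π₀ {0} = 0 ∧ π₀ {1} = 1 / 3 ∧ π₀ {2} = 2 / 3)
    (h₁v : π₁ {0} = 1 ∧ π₁ {1} = 0 ∧ π₁ {2} = 0)
    (h₂v : π₂ {0} = 0 ∧ π₂ {1} = 2 / 3 ∧ π₂ {2} = 1 / 3) :
    ExtendedBayesianism ⊤ ⊤ π₀ π₁ ∧ ExtendedBayesianism ⊤ ⊤ π₁ π₂ ∧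
      ¬ ExtendedBayesianism ⊤ ⊤ π₀ π₂ := by
  obtain ⟨a0, a1, a2⟩ := h₀v
  obtain ⟨b0, b1, b2⟩ := h₁v
  obtain ⟨c0, c1, c2⟩ := h₂v
  have hp2 := aux_pair π₂ h₂ c0
  refine ⟨aux_eb π₀ π₁ h₀ {0} a0 b0, aux_eb π₁ π₂ h₁ {1, 2} ?_ hp2, ?_⟩
  · letI : MeasurableSpace (Fin 3) := ⊤
    exact measure_union_null (s := {1}) (t := {2}) b1 b2
  · rintro ⟨πb, hb, hext, h⟩
    have m1 : (1 : Fin 3) ∈ spt ⊤ π₂ := aux_mem π₂ h₂ 1 (by simp [c1])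
    have m2 : (2 : Fin 3) ∈ spt ⊤ π₂ := aux_mem π₂ h₂ 2 (by simp [c2])
    have hs : spt ⊤ π₂ = {1, 2} := by
      apply Set.Subset.antisymm (aux_sub π₂ _ hp2)
      rintro i (rfl | rfl) <;> assumption
    rw [hs] at h
    have hpos : 0 < outerM ⊤ π₀ {1, 2} := by
      refine lt_of_lt_of_le one_pos (le_iInf₂ fun F hF => ?_)
      rw [← aux_pair π₀ h₀ a0]
      exact measure_mono hF.2
    have h3 := (h hpos).2 {1} trivial
    have hi : ({1} ∩ {1, 2} : Set (Fin 3)) = {1} := by ext i; simp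
    rw [hi, hext _ trivial, hext _ trivial, aux_pair π₀ h₀ a0, a1, c1] at h3
    have h4 := congrArg ENNReal.toReal h3
    norm_num at h4
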